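/- arXiv:math/0112021 — 7 statements merged into one kernel-verified Lean document; each statement's English description precedes it below -/
import Mathlib

section
/- (Small gain lemma for asymptotic amplitude.) Let R be a behavior with input-value space 𝒰 and output-value space 𝒴, and S a behavior with input-value space 𝒴 and output-value space 𝒰. Suppose R has Cauchy gain γ₁ ∈ 𝒦∞ and S has Cauchy gain γ₂ ∈ 𝒦∞, and that γ₁(γ₂(r)) < r for all r > 0. Then every (ω,η) ∈ R ∩ S⁻¹ with ‖ω‖_aa < ∞ satisfies ‖ω‖_aa = ‖η‖_aa = 0. -/
open Filter Topology MeasureTheory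
open scoped ENNReal NNReal

noncomputable def aa {M : Type*} [PseudoMetricSpace M] (ω : ℝ → M) : ℝ≥0∞ :=
  Filter.limsup (fun p : ℝ × ℝ => edist (ω p.1) (ω p.2)) (Filter.atTop ×ˢ Filter.atTop)

def KInfty (γ : ℝ≥0 → ℝ≥0) : Prop :=
  Continuous γ ∧ StrictMono γ ∧ γ 0 = 0 ∧ Filter.Tendsto γ Filter.atTop Filter.atTop

noncomputable def extK (γ : ℝ≥0 → ℝ≥0) : ℝ≥0∞ → ℝ≥0∞ :=
  fun x => if x = ⊤ then ⊤ else ↑(γ x.toNNReal)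

def CauchyGain {U Y : Type*} [PseudoMetricSpace U] [PseudoMetricSpace Y]
    (R : Set ((ℝ → U) × (ℝ → Y))) (γ : ℝ≥0 → ℝ≥0) : Prop :=
  ∀ p ∈ R, aa p.2 ≤ extK γ (aa p.1)

def IncGain {U Y : Type*} [PseudoMetricSpace U] [PseudoMetricSpace Y]
    (R : Set ((ℝ → U) × (ℝ → Y))) (κ : ℝ≥0 → ℝ≥0) : Prop :=
  ∀ p₁ ∈ R, ∀ p₂ ∈ R, ∀ u₁ u₂ : U,
    Filter.Tendsto p₁.1 Filter.atTop (nhds u₁) → Filter.Tendsto p₂.1 Filter.atTop (nhds u₂) →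
    Filter.limsup (fun t => edist (p₁.2 t) (p₂.2 t)) Filter.atTop ≤ ↑(κ (nndist u₁ u₂))

def convTo {U : Type*} [PseudoMetricSpace U] (ω : ℝ → U) (U₀ : Set U) : Prop :=
  ∀ ε > 0, ∃ T : ℝ, 0 ≤ T ∧ ∀ t ≥ T, ∃ u' ∈ U₀, dist (ω t) u' ≤ ε

def omegaLim {U : Type*} [PseudoMetricSpace U] (ω : ℝ → U) : Set U :=
  {u | ∃ t : ℕ → ℝ, Filter.Tendsto t Filter.atTop Filter.atTop ∧
       Filter.Tendsto (fun i => ω (t i)) Filter.atTop (nhds u)}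

def Precomp {U : Type*} [TopologicalSpace U] (ω : ℝ → U) : Prop :=
  ∃ K : Set U, IsCompact K ∧ ∀ t : ℝ, 0 ≤ t → ω t ∈ K

def cascade {U Y Z : Type*} (R : Set ((ℝ → U) × (ℝ → Y))) (S : Set ((ℝ → Y) × (ℝ → Z))) :
    Set ((ℝ → U) × (ℝ → Z)) :=
  {p | ∃ η : ℝ → Y, (p.1, η) ∈ R ∧ (η, p.2) ∈ S}

def CauchyGainOn {U Y : Type*} [PseudoMetricSpace U] [PseudoMetricSpace Y]
    (R : Set ((ℝ → U) × (ℝ → Y))) (γ : ℝ≥0 → ℝ≥0) (U₀ : Set U) : Prop :=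
  ∀ p ∈ R, convTo p.1 U₀ → aa p.2 ≤ extK γ (aa p.1)

def IncGainOn {U Y : Type*} [PseudoMetricSpace U] [PseudoMetricSpace Y]
    (R : Set ((ℝ → U) × (ℝ → Y))) (κ : ℝ≥0 → ℝ≥0) (U₀ : Set U) : Prop :=
  ∀ p₁ ∈ R, ∀ p₂ ∈ R, ∀ u₁ u₂ : U, u₁ ∈ U₀ → u₂ ∈ U₀ →
    Filter.Tendsto p₁.1 Filter.atTop (nhds u₁) → Filter.Tendsto p₂.1 Filter.atTop (nhds u₂) →
    Filter.limsup (fun t => edist (p₁.2 t) (p₂.2 t)) Filter.atTop ≤ ↑(κ (nndist u₁ u₂))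

def ZV {E : Type*} (X : Set E) (V : E → ℝ) : Set E := {x ∈ X | V x = 0}

def UDecrease {E 𝒰 : Type*} [NormedAddCommGroup E] [NormedSpace ℝ E] [PseudoMetricSpace 𝒰]
    (X₀ X : Set E) (f : E → 𝒰 → E) (Uset : Set 𝒰) (V : E → ℝ) : Prop :=
  (∀ x ∈ X, 0 ≤ V x) ∧ ContinuousOn V X ∧
  (∀ a b : ℝ, 0 ≤ a → a ≤ b → IsCompact {x ∈ X | a ≤ V x ∧ V x ≤ b}) ∧
  (∀ x ∈ X, V x ≠ 0 → ∃ (W : Set E) (Vt : E → ℝ), IsOpen W ∧ x ∈ W ∧ W ⊆ X₀ ∧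
    ContDiffOn ℝ 1 Vt W ∧ (∀ z ∈ W ∩ X, Vt z = V z) ∧
    ∀ u ∈ Uset, fderiv ℝ Vt x (f x u) < 0)

lemma extK_coe (γ : ℝ≥0 → ℝ≥0) (r : ℝ≥0) : extK γ r = γ r := by
  simp [extK]

lemma small_gain_extK {γ₁ γ₂ : ℝ≥0 → ℝ≥0} (hγ₁ : KInfty γ₁) (hγ₂ : KInfty γ₂)
    (hsg : ∀ r : ℝ≥0, 0 < r → γ₁ (γ₂ r) < r) {x y : ℝ≥0∞} (hx : x < ⊤)
    (hyx : y ≤ extK γ₁ x) (hxy : x ≤ extK γ₂ y) : x = 0 ∧ y = 0 := by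
  lift x to ℝ≥0 using hx.ne
  rw [extK_coe] at hyx
  lift y to ℝ≥0 using (hyx.trans_lt ENNReal.coe_lt_top).ne
  rw [extK_coe] at hxy
  rw [ENNReal.coe_le_coe] at hyx hxy
  have hy : y = 0 := by
    by_contra h
    exact (hyx.trans (hγ₁.2.1.monotone hxy)).not_gt (hsg y (pos_iff_ne_zero.mpr h))
  rw [hy, hγ₂.2.2.1, nonpos_iff_eq_zero] at hxy
  simp [hxy, hy]

/-- Small gain lemma for asymptotic amplitude. -/
theorem stmt2 {𝒰 𝒴 : Type*} [MetricSpace 𝒰] [CompleteSpace 𝒰] [MetricSpace 𝒴] [CompleteSpace 𝒴]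
    (R : Set ((ℝ → 𝒰) × (ℝ → 𝒴))) (S : Set ((ℝ → 𝒴) × (ℝ → 𝒰)))
    (γ₁ γ₂ : ℝ≥0 → ℝ≥0) (hγ₁ : KInfty γ₁) (hγ₂ : KInfty γ₂)
    (hR : CauchyGain R γ₁) (hS : CauchyGain S γ₂)
    (hsg : ∀ r : ℝ≥0, 0 < r → γ₁ (γ₂ r) < r) :
    ∀ ω : ℝ → 𝒰, ∀ η : ℝ → 𝒴, (ω, η) ∈ R → (η, ω) ∈ S → aa ω < ⊤ →
      aa ω = 0 ∧ aa η = 0 := by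
  intro ω η hωη hηω hω
  have hηω_gain := hR _ hωη
  have hωη_gain := hS _ hηω
  exact small_gain_extK hγ₁ hγ₂ hsg hω hηω_gain hωη_gain
end

section
/- (Small gain lemma with uniqueness.) Let R be a behavior with input-value space 𝒰 and output-value space 𝒴, and S a behavior with input-value space 𝒴 and output-value space 𝒰. Suppose R and S have Cauchy gains γ₁, γ₂ ∈ 𝒦∞ and incremental limit gains κ₁, κ₂ ∈ 𝒦∞ respectively, and that γ₁(γ₂(r)) < r and κ₁(κ₂(r)) < r for all r > 0. Then there exist ū ∈ 𝒰 and ȳ ∈ 𝒴 such that every (ω,η) ∈ R ∩ S⁻¹ with ‖ω‖_aa < ∞ satisfies lim_{t→∞} ω(t) = ū and lim_{t→∞} η(t) = ȳ (assuming R ∩ S⁻¹ contains at least one such pair). -/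
open Filter Topology MeasureTheory
open scoped ENNReal NNReal

theorem eq_zero_of_le_of_le {f g : ℝ≥0 → ℝ≥0} (hf : Monotone f)
    (h : ∀ r : ℝ≥0, 0 < r → f (g r) < r) {a b : ℝ≥0} (ha : a ≤ f b) (hb : b ≤ g a) : a = 0 := by
  by_contra hne
  exact absurd (h a (pos_iff_ne_zero.mpr hne)) (not_lt.mpr (ha.trans (hf hb)))

theorem cauchy_map_of_aa_eq_zero {M : Type*} [PseudoMetricSpace M] {ω : ℝ → M} (h : aa ω = 0) :
    Cauchy (map ω atTop) := by
  refine cauchy_map_iff.mpr ⟨inferInstance, ?_⟩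
  rw [uniformity_basis_edist.tendsto_right_iff]
  intro ε hε
  exact eventually_lt_of_limsup_lt (h.trans_lt hε)

theorem tendsto_of_feedback {U Y : Type*} [PseudoMetricSpace U] [CompleteSpace U]
    [PseudoMetricSpace Y] [CompleteSpace Y]
    {R : Set ((ℝ → U) × (ℝ → Y))} {S : Set ((ℝ → Y) × (ℝ → U))} {γ₁ γ₂ : ℝ≥0 → ℝ≥0}
    (hγ₁ : KInfty γ₁) (hγ₂ : KInfty γ₂) (hR : CauchyGain R γ₁) (hS : CauchyGain S γ₂)
    (hsg : ∀ r : ℝ≥0, 0 < r → γ₁ (γ₂ r) < r) {ω : ℝ → U} {η : ℝ → Y}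
    (h₁ : (ω, η) ∈ R) (h₂ : (η, ω) ∈ S) (hω : aa ω < ⊤) :
    (∃ u, Tendsto ω atTop (𝓝 u)) ∧ ∃ y, Tendsto η atTop (𝓝 y) := by
  have hη' : aa η ≤ extK γ₁ (aa ω) := hR (ω, η) h₁
  have hω' : aa ω ≤ extK γ₂ (aa η) := hS (η, ω) h₂
  lift aa ω to ℝ≥0 using hω.ne with a ha
  simp only [extK, ENNReal.coe_ne_top, if_false, ENNReal.toNNReal_coe] at hη'
  lift aa η to ℝ≥0 using (hη'.trans_lt ENNReal.coe_lt_top).ne with b hb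
  simp only [extK, ENNReal.coe_ne_top, if_false, ENNReal.toNNReal_coe] at hω'
  norm_cast at hη' hω'
  have hb0 : b = 0 := eq_zero_of_le_of_le hγ₁.2.1.monotone hsg hη' hω'
  have ha0 : a = 0 := by simpa [hb0, hγ₂.2.2.1] using hω'
  exact ⟨cauchy_map_iff_exists_tendsto.mp (cauchy_map_of_aa_eq_zero (by simp [← ha, ha0])),
    cauchy_map_iff_exists_tendsto.mp (cauchy_map_of_aa_eq_zero (by simp [← hb, hb0]))⟩

theorem IncGain.nndist_le {U Y : Type*} [PseudoMetricSpace U] [PseudoMetricSpace Y]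
    {R : Set ((ℝ → U) × (ℝ → Y))} {κ : ℝ≥0 → ℝ≥0} (hR : IncGain R κ)
    {ω₁ ω₂ : ℝ → U} {η₁ η₂ : ℝ → Y} (h₁ : (ω₁, η₁) ∈ R) (h₂ : (ω₂, η₂) ∈ R)
    {u₁ u₂ : U} {y₁ y₂ : Y}
    (hu₁ : Tendsto ω₁ atTop (𝓝 u₁)) (hu₂ : Tendsto ω₂ atTop (𝓝 u₂))
    (hy₁ : Tendsto η₁ atTop (𝓝 y₁)) (hy₂ : Tendsto η₂ atTop (𝓝 y₂)) :
    nndist y₁ y₂ ≤ κ (nndist u₁ u₂) := by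
  have h := hR _ h₁ _ h₂ u₁ u₂ hu₁ hu₂
  rw [(hy₁.edist hy₂).limsup_eq, edist_nndist] at h
  exact_mod_cast h

/-- Small gain lemma with uniqueness. -/
theorem stmt3 {𝒰 𝒴 : Type*} [MetricSpace 𝒰] [CompleteSpace 𝒰] [MetricSpace 𝒴] [CompleteSpace 𝒴]
    (R : Set ((ℝ → 𝒰) × (ℝ → 𝒴))) (S : Set ((ℝ → 𝒴) × (ℝ → 𝒰)))
    (γ₁ γ₂ κ₁ κ₂ : ℝ≥0 → ℝ≥0)
    (hγ₁ : KInfty γ₁) (hγ₂ : KInfty γ₂) (hκ₁ : KInfty κ₁) (hκ₂ : KInfty κ₂)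
    (hR : CauchyGain R γ₁) (hS : CauchyGain S γ₂)
    (hRi : IncGain R κ₁) (hSi : IncGain S κ₂)
    (hsg : ∀ r : ℝ≥0, 0 < r → γ₁ (γ₂ r) < r)
    (hsk : ∀ r : ℝ≥0, 0 < r → κ₁ (κ₂ r) < r)
    (hne : ∃ ω : ℝ → 𝒰, ∃ η : ℝ → 𝒴, (ω, η) ∈ R ∧ (η, ω) ∈ S ∧ aa ω < ⊤) :
    ∃ (ubar : 𝒰) (ybar : 𝒴), ∀ ω : ℝ → 𝒰, ∀ η : ℝ → 𝒴,
      (ω, η) ∈ R → (η, ω) ∈ S → aa ω < ⊤ →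
      Filter.Tendsto ω Filter.atTop (nhds ubar) ∧ Filter.Tendsto η Filter.atTop (nhds ybar) := by
  obtain ⟨ω₀, η₀, hR₀, hS₀, hω₀⟩ := hne
  obtain ⟨⟨u₀, hu₀⟩, y₀, hy₀⟩ := tendsto_of_feedback hγ₁ hγ₂ hR hS hsg hR₀ hS₀ hω₀
  refine ⟨u₀, y₀, fun ω η h₁ h₂ hω => ?_⟩
  obtain ⟨⟨u, hu⟩, y, hy⟩ := tendsto_of_feedback hγ₁ hγ₂ hR hS hsg h₁ h₂ hω
  have hyu := hRi.nndist_le h₁ hR₀ hu hu₀ hy hy₀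
  have huy := hSi.nndist_le h₂ hS₀ hy hy₀ hu hu₀
  have hy0 : nndist y y₀ = 0 := eq_zero_of_le_of_le hκ₁.2.1.monotone hsk hyu huy
  have hu0 : nndist u u₀ = 0 := by simpa [hy0, hκ₂.2.2.1] using huy
  rw [nndist_eq_zero] at hy0 hu0
  exact ⟨hu0 ▸ hu, hy0 ▸ hy⟩
end

section
/- Let R be a behavior with input-value space 𝒰 and output-value space 𝒴, and S a behavior with input-value space 𝒴 and output-value space 𝒵. Let U₀ ⊆ 𝒰 and Y₀ ⊆ 𝒴, and suppose: R has Cauchy gain γ₁ on U₀; S has Cauchy gain γ₂ on Y₀; and whenever (ω,η) ∈ R with ω → U₀, necessarily η → Y₀. Then the cascade S ∘ R has Cauchy gain γ₂ ∘ γ₁ on U₀. -/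
open Filter Topology MeasureTheory
open scoped ENNReal NNReal

theorem extK_monotone {γ : ℝ≥0 → ℝ≥0} (hγ : Monotone γ) : Monotone (extK γ) := by
  intro x y hxy
  rcases eq_or_ne y ⊤ with rfl | hy
  · simp [extK]
  · have hx : x ≠ ⊤ := ne_top_of_le_ne_top hy hxy
    simpa [extK, hx, hy] using hγ (ENNReal.toNNReal_mono hy hxy)

theorem extK_comp (γ₂ γ₁ : ℝ≥0 → ℝ≥0) (x : ℝ≥0∞) :
    extK (γ₂ ∘ γ₁) x = extK γ₂ (extK γ₁ x) := by
  by_cases hx : x = ⊤ <;> simp [extK, hx]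

/-- relative gains compose along a cascade. -/
theorem stmt9 {𝒰 𝒴 𝒵 : Type*} [MetricSpace 𝒰] [MetricSpace 𝒴] [MetricSpace 𝒵]
    (R : Set ((ℝ → 𝒰) × (ℝ → 𝒴))) (S : Set ((ℝ → 𝒴) × (ℝ → 𝒵)))
    (U₀ : Set 𝒰) (Y₀ : Set 𝒴)
    (γ₁ γ₂ : ℝ≥0 → ℝ≥0) (hγ₁ : KInfty γ₁) (hγ₂ : KInfty γ₂)
    (hR : CauchyGainOn R γ₁ U₀) (hS : CauchyGainOn S γ₂ Y₀)
    (hprop : ∀ p ∈ R, convTo p.1 U₀ → convTo p.2 Y₀) :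
    CauchyGainOn (cascade R S) (γ₂ ∘ γ₁) U₀ := by
  intro p hp hω
  obtain ⟨η, hη, hζ⟩ := hp
  have hη_aa : aa η ≤ extK γ₁ (aa p.1) := hR (p.1, η) hη hω
  have hζ_aa : aa p.2 ≤ extK γ₂ (aa η) := hS (η, p.2) hζ (hprop (p.1, η) hη hω)
  rw [extK_comp]
  exact hζ_aa.trans (extK_monotone hγ₂.2.1.monotone hη_aa)
end

section
/- Let 𝒰 be a metric space. For every ω : [0,∞) → 𝒰, the diameter of the omega-limit set satisfies |Ω⁺[ω]| ≤ ‖ω‖_aa. If moreover ω is precompact, then equality holds: ‖ω‖_aa = |Ω⁺[ω]|. -/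
open Filter Topology MeasureTheory
open scoped ENNReal NNReal

theorem ediam_omegaLim_le_aa {M : Type*} [PseudoMetricSpace M] (ω : ℝ → M) :
    Metric.ediam (omegaLim ω) ≤ aa ω := by
  refine Metric.ediam_le ?_
  rintro u ⟨s, hs, hsu⟩ v ⟨t, ht, htv⟩
  refine le_of_forall_gt_imp_ge_of_dense fun c hc => ?_
  have hlt := (hs.prodMk ht).eventually (eventually_lt_of_limsup_lt hc)
  exact le_of_tendsto (hsu.edist htv) (hlt.mono fun _ h => h.le)

theorem Precomp.aa_le_ediam_omegaLim {M : Type*} [PseudoMetricSpace M] {ω : ℝ → M}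
    (hω : Precomp ω) : aa ω ≤ Metric.ediam (omegaLim ω) := by
  obtain ⟨K, hK, hωK⟩ := hω
  refine le_of_forall_lt_imp_le_of_dense fun c hc => ?_
  obtain ⟨p, hp, hcp⟩ := exists_seq_forall_of_frequently (frequently_lt_of_lt_limsup (h := hc))
  have hp₁ : Tendsto (fun n => (p n).1) atTop atTop := tendsto_fst.comp hp
  have hp₂ : Tendsto (fun n => (p n).2) atTop atTop := tendsto_snd.comp hp
  have hmem : ∀ᶠ n in atTop, (ω (p n).1, ω (p n).2) ∈ K ×ˢ K := by
    filter_upwards [hp₁.eventually_ge_atTop 0, hp₂.eventually_ge_atTop 0] with n h₁ h₂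
    exact ⟨hωK _ h₁, hωK _ h₂⟩
  obtain ⟨⟨u, v⟩, -, φ, hφ, hlim⟩ := (hK.prod hK).tendsto_subseq' hmem.frequently
  have hu : Tendsto (fun n => ω (p (φ n)).1) atTop (𝓝 u) := hlim.fst_nhds
  have hv : Tendsto (fun n => ω (p (φ n)).2) atTop (𝓝 v) := hlim.snd_nhds
  calc c ≤ edist u v := ge_of_tendsto' (hu.edist hv) fun n => (hcp (φ n)).le
    _ ≤ Metric.ediam (omegaLim ω) :=
      Metric.edist_le_ediam_of_mem ⟨_, hp₁.comp hφ.tendsto_atTop, hu⟩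
        ⟨_, hp₂.comp hφ.tendsto_atTop, hv⟩

/-- `|Ω⁺[ω]| ≤ ‖ω‖_aa` always, with equality when ω is precompact. -/
theorem stmt11 {𝒰 : Type*} [MetricSpace 𝒰] (ω : ℝ → 𝒰) :
    EMetric.diam (omegaLim ω) ≤ aa ω ∧ (Precomp ω → aa ω = EMetric.diam (omegaLim ω)) :=
  ⟨ediam_omegaLim_le_aa ω, fun hω => hω.aa_le_ediam_omegaLim.antisymm (ediam_omegaLim_le_aa ω)⟩
end

section
/- Let 𝒳 ⊆ ℝⁿ, V : 𝒳 → [0,∞) continuous, and ξ : [0,∞) → 𝒳 such that V∘ξ is locally Lipschitz. Let a > 0 and T₀ ≥ 0, and suppose that for almost every t ≥ T₀ at which V(ξ(t)) ≥ a, the derivative (d/dt)V(ξ(t)) exists and is strictly negative. Define T₁ := inf{t ≥ T₀ : V(ξ(t)) ≤ a} (with T₁ = +∞ if no such t exists). Then V(ξ(t)) ≤ V(ξ(T₀)) for all t ∈ [T₀, T₁), and V(ξ(t)) ≤ a for all t ≥ T₁. -/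
open Filter Topology MeasureTheory
open scoped ENNReal NNReal

/-- A locally Lipschitz real function whose derivative is nonpositive almost everywhere on an
interval does not increase from the left end to the right end. -/
theorem LocallyLipschitzOn.le_of_ae_deriv_nonpos {f : ℝ → ℝ} {c d : ℝ} (hcd : c ≤ d)
    (hf : LocallyLipschitzOn (Set.Icc c d) f)
    (hderiv : ∀ᵐ t : ℝ, t ∈ Set.Ioc c d → deriv f t ≤ 0) : f d ≤ f c := by
  obtain ⟨K, hK⟩ := hf.exists_lipschitzOnWith_of_compact isCompact_Icc
  rw [← Set.uIcc_of_le hcd] at hK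
  have hftc := hK.absolutelyContinuousOnInterval.integral_deriv_eq_sub
  rw [intervalIntegral.integral_of_le hcd] at hftc
  have hint : ∫ t in Set.Ioc c d, deriv f t ≤ 0 :=
    setIntegral_nonpos_of_ae_restrict ((ae_restrict_iff' measurableSet_Ioc).2 hderiv)
  linarith

/-- the monotonicity claim along a trajectory whose Lyapunov value
decreases whenever it is at least `a`. Here `T₁ = sInf {t ≥ T₀ | V(ξ t) ≤ a}`;
the first conjunct covers `t ∈ [T₀, T₁)` (expressed as: `t` is below every element
of that set), the second covers `t ≥ T₁` when the set is nonempty (when it is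
empty, `T₁ = +∞` and there is nothing to prove). -/
theorem stmt13 {n : ℕ} (X : Set (Fin n → ℝ)) (V : (Fin n → ℝ) → ℝ)
    (hV0 : ∀ x ∈ X, 0 ≤ V x) (hVc : ContinuousOn V X)
    (ξ : ℝ → (Fin n → ℝ)) (hξX : ∀ t : ℝ, 0 ≤ t → ξ t ∈ X)
    (hLip : ∀ t : ℝ, 0 ≤ t → ∃ ε > (0:ℝ), ∃ K : ℝ≥0,
      LipschitzOnWith K (fun s => V (ξ s)) (Set.Icc (t - ε) (t + ε)))
    (a : ℝ) (ha : 0 < a) (T₀ : ℝ) (hT₀ : 0 ≤ T₀)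
    (hdec : ∀ᵐ t : ℝ ∂volume, T₀ ≤ t → a ≤ V (ξ t) →
      ∃ d : ℝ, d < 0 ∧ HasDerivAt (fun s => V (ξ s)) d t) :
    (∀ t : ℝ, T₀ ≤ t → (∀ s : ℝ, T₀ ≤ s → V (ξ s) ≤ a → t < s) → V (ξ t) ≤ V (ξ T₀)) ∧
    ({s : ℝ | T₀ ≤ s ∧ V (ξ s) ≤ a}.Nonempty →
      ∀ t : ℝ, sInf {s : ℝ | T₀ ≤ s ∧ V (ξ s) ≤ a} ≤ t → V (ξ t) ≤ a) := by
  set f : ℝ → ℝ := fun s => V (ξ s)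
  have hloc : LocallyLipschitzOn (Set.Ici T₀) f := by
    intro t ht
    obtain ⟨ε, hε, K, hK⟩ := hLip t (hT₀.trans ht)
    exact ⟨K, _, mem_nhdsWithin_of_mem_nhds (Icc_mem_nhds (by linarith) (by linarith)), hK⟩
  have hdecr : ∀ c d : ℝ, T₀ ≤ c → c ≤ d → (∀ u ∈ Set.Ioc c d, a < f u) → f d ≤ f c := by
    intro c d hc hcd habove
    refine (hloc.mono fun u hu => hc.trans hu.1).le_of_ae_deriv_nonpos hcd ?_
    filter_upwards [hdec] with u hu hmem
    obtain ⟨e, he, hder⟩ := hu (hc.trans hmem.1.le) (habove u hmem).le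
    exact hder.deriv ▸ he.le
  refine ⟨fun t ht hlt => hdecr T₀ t le_rfl ht fun u hu => ?_, fun hne t ht => ?_⟩
  · by_contra! hle
    exact (hlt u hu.1.le hle).not_ge hu.2
  · have hbdd : BddBelow {s : ℝ | T₀ ≤ s ∧ f s ≤ a} := ⟨T₀, fun s hs => hs.1⟩
    have hclosed : IsClosed {s : ℝ | T₀ ≤ s ∧ f s ≤ a} :=
      hloc.continuousOn.preimage_isClosed_of_isClosed isClosed_Ici isClosed_Iic
    have hmem := hclosed.csInf_mem hne hbdd
    refine (IsClosed.mem_of_ge_of_forall_exists_gt (hclosed.inter isClosed_Icc) hmem ht ?_).2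
    rintro x ⟨⟨hx, hfx⟩, -, hxt⟩
    by_contra hempty
    have habove : ∀ u ∈ Set.Ioc x t, a < f u := by
      intro u hu
      by_contra! hle
      exact hempty ⟨u, ⟨hx.trans hu.1.le, hle⟩, hu⟩
    exact (habove t ⟨hxt, le_rfl⟩).not_ge ((hdecr x t hx hxt.le habove).trans hfx)
end

section
/- Let 𝒳₀ ⊆ ℝⁿ be open, 𝒳 ⊆ 𝒳₀, 𝒰 and 𝒴 complete metric spaces, f : 𝒳₀ × 𝒰 → ℝⁿ continuous, and h : 𝒳 → 𝒴 continuous. Let γ ∈ 𝒦∞ and suppose that for each compact U ⊆ 𝒰 there exists a U-decrease function V_U with |h(Z_{V_U})| ≤ γ(|U|). Let ω : [0,∞) → 𝒰 be Lebesgue-measurable and precompact, ξ : [0,∞) → 𝒳 locally Lipschitz with ξ'(t) = f(ξ(t), ω(t)) for almost every t ≥ 0, and η := h∘ξ. Then ξ and η are precompact, and for every compact U ⊆ 𝒰 with ω → U, one has ξ → Z_{V_U} and η → h(Z_{V_U}). -/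
open Filter Topology MeasureTheory
open scoped ENNReal NNReal

/-- A Lipschitz function whose derivative is a.e. at most `-c` decreases at rate at least `c`. -/
theorem LipschitzOnWith.le_sub_mul_of_ae_deriv_le {g : ℝ → ℝ} {K : ℝ≥0} {s t c : ℝ} (hst : s ≤ t)
    (hg : LipschitzOnWith K g (Set.Icc s t))
    (hd : ∀ᵐ τ : ℝ, τ ∈ Set.Ioo s t → deriv g τ ≤ -c) :
    g t ≤ g s - c * (t - s) := by
  have hac : AbsolutelyContinuousOnInterval g s t :=
    LipschitzOnWith.absolutelyContinuousOnInterval (K := K) (by rwa [Set.uIcc_of_le hst])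
  have hle : ∫ τ in s..t, deriv g τ ≤ ∫ _ in s..t, -c := by
    rw [intervalIntegral.integral_of_le hst, intervalIntegral.integral_of_le hst,
      integral_Ioc_eq_integral_Ioo, integral_Ioc_eq_integral_Ioo]
    refine integral_mono_ae ?_ ?_ ?_
    · exact hac.intervalIntegrable_deriv.1.mono_set Set.Ioo_subset_Ioc_self
    · exact integrable_const _
    · exact (ae_restrict_iff' measurableSet_Ioo).2 hd
  rw [hac.integral_deriv_eq_sub, intervalIntegral.integral_const, smul_eq_mul] at hle
  linarith

/-- A sublevel set `{g ≤ a}` entered at time `s` is not left before time `t`, provided that `g`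
does not increase over any final segment of `[s, t]` on which it stays above `a`. -/
theorem le_of_le_of_forall_final_segment {g : ℝ → ℝ} {s t a : ℝ} (hst : s ≤ t)
    (hg : ContinuousOn g (Set.Icc s t)) (hs : g s ≤ a)
    (hdec : ∀ r ∈ Set.Icc s t, (∀ τ ∈ Set.Icc r t, a ≤ g τ) → g t ≤ g r) : g t ≤ a := by
  have hclosed : IsClosed (Set.Icc s t ∩ g ⁻¹' Set.Iic a) :=
    hg.preimage_isClosed_of_isClosed isClosed_Icc isClosed_Iic
  have hcompact : IsCompact (Set.Icc s t ∩ g ⁻¹' Set.Iic a) :=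
    isCompact_Icc.of_isClosed_subset hclosed Set.inter_subset_left
  obtain ⟨r, ⟨hr, hra⟩, hmax⟩ := hcompact.exists_isGreatest ⟨s, ⟨le_rfl, hst⟩, hs⟩
  have habove : ∀ τ ∈ Set.Ioc r t, a < g τ := by
    intro τ hτ
    by_contra! hle
    exact absurd (hmax ⟨⟨hr.1.trans hτ.1.le, hτ.2⟩, hle⟩) (not_le.2 hτ.1)
  rcases hr.2.eq_or_lt with rfl | hrt
  · exact hra
  have hgr : a ≤ g r := by
    have hcont : Tendsto g (𝓝[Set.Ioc r t] r) (𝓝 (g r)) :=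
      (hg r hr).mono (fun τ hτ => ⟨hr.1.trans hτ.1.le, hτ.2⟩)
    have hne : (𝓝[Set.Ioc r t] r).NeBot := by
      rw [nhdsWithin_Ioc_eq_nhdsGT hrt]; infer_instance
    exact ge_of_tendsto hcont (eventually_nhdsWithin_of_forall fun τ hτ => (habove τ hτ).le)
  refine (hdec r hr fun τ hτ => ?_).trans hra
  rcases hτ.1.eq_or_lt with rfl | hlt
  · exact hgr
  · exact (habove τ ⟨hlt, hτ.2⟩).le

section Decrease

variable {E 𝒰 : Type*} [NormedAddCommGroup E] [NormedSpace ℝ E]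
  {X₀ X : Set E} {f : E → 𝒰 → E} {U : Set 𝒰} {V : E → ℝ}

/-- At `x`, the function `V` has a local `C¹` extension from `X` decreasing at rate at least `c`
along `f x u` for all `u ∈ O`. -/
def DecreaseAt (X : Set E) (f : E → 𝒰 → E) (O : Set 𝒰) (V : E → ℝ) (c : ℝ) (x : E) : Prop :=
  ∃ (W : Set E) (Vt : E → ℝ), IsOpen W ∧ x ∈ W ∧ ContDiffOn ℝ 1 Vt W ∧
    (∀ z ∈ W ∩ X, Vt z = V z) ∧ ∀ u ∈ O, fderiv ℝ Vt x (f x u) ≤ -c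

theorem DecreaseAt.mono {O O' : Set 𝒰} {c c' : ℝ} {x : E} (hd : DecreaseAt X f O V c x)
    (hO : O' ⊆ O) (hc : c' ≤ c) : DecreaseAt X f O' V c' x := by
  obtain ⟨W, Vt, hW, hx, hVt, heq, hlt⟩ := hd
  exact ⟨W, Vt, hW, hx, hVt, heq, fun u hu => (hlt u (hO hu)).trans (neg_le_neg hc)⟩

/-- Along a trajectory staying where `V` decreases at rate `c`, the function `V` decays linearly. -/
theorem decay_of_decreaseAt {O : Set 𝒰} {c s t : ℝ} {ω : ℝ → 𝒰} {ξ : ℝ → E}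
    (hξlip : LocallyLipschitz ξ) (hξX : ∀ t : ℝ, 0 ≤ t → ξ t ∈ X)
    (hode : ∀ᵐ t : ℝ, 0 ≤ t → HasDerivAt ξ (f (ξ t) (ω t)) t) (hs : 0 ≤ s) (hst : s ≤ t)
    (hd : ∀ τ ∈ Set.Icc s t, DecreaseAt X f O V c (ξ τ)) (hω : ∀ τ ∈ Set.Icc s t, ω τ ∈ O) :
    V (ξ t) ≤ V (ξ s) - c * (t - s) := by
  have hloc : LocallyLipschitzOn (Set.Icc s t) (fun τ => V (ξ τ)) := by
    intro τ hτ
    obtain ⟨W, Vt, hW, hτW, hVt, heq, -⟩ := hd τ hτ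
    obtain ⟨K₁, N₁, hN₁, hK₁⟩ := (hVt.contDiffAt (hW.mem_nhds hτW)).exists_lipschitzOnWith
    obtain ⟨K₂, N₂, hN₂, hK₂⟩ := hξlip τ
    have hξc := hξlip.continuous.continuousAt (x := τ)
    refine ⟨K₁ * K₂, (N₂ ∩ ξ ⁻¹' (N₁ ∩ W)) ∩ Set.Icc s t, ?_, ?_⟩
    · exact inter_mem (mem_nhdsWithin_of_mem_nhds
        (inter_mem hN₂ (hξc (inter_mem hN₁ (hW.mem_nhds hτW))))) self_mem_nhdsWithin
    · have hcomp : LipschitzOnWith (K₁ * K₂) (Vt ∘ ξ) ((N₂ ∩ ξ ⁻¹' (N₁ ∩ W)) ∩ Set.Icc s t) :=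
        (hK₁.comp (hK₂.mono fun σ hσ => hσ.1.1) fun σ hσ => hσ.1.2.1)
      intro σ hσ σ' hσ'
      have h₁ := heq (ξ σ) ⟨hσ.1.2.2, hξX σ (hs.trans hσ.2.1)⟩
      have h₂ := heq (ξ σ') ⟨hσ'.1.2.2, hξX σ' (hs.trans hσ'.2.1)⟩
      simpa only [Function.comp_apply, h₁, h₂] using hcomp hσ hσ'
  obtain ⟨K, hK⟩ := hloc.exists_lipschitzOnWith_of_compact isCompact_Icc
  refine hK.le_sub_mul_of_ae_deriv_le hst ?_
  filter_upwards [hode] with τ hτode hτ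
  obtain ⟨W, Vt, hW, hτW, hVt, heq, hneg⟩ := hd τ ⟨hτ.1.le, hτ.2.le⟩
  have hτ0 : 0 < τ := hs.trans_lt hτ.1
  have hder : HasDerivAt (Vt ∘ ξ) (fderiv ℝ Vt (ξ τ) (f (ξ τ) (ω τ))) τ :=
    (((hVt.contDiffAt (hW.mem_nhds hτW)).differentiableAt one_ne_zero).hasFDerivAt).comp_hasDerivAt
      τ (hτode hτ0.le)
  have hev : (fun σ => V (ξ σ)) =ᶠ[𝓝 τ] Vt ∘ ξ := by
    filter_upwards [hξlip.continuous.continuousAt (hW.mem_nhds hτW), Ioi_mem_nhds hτ0]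
      with σ hσ hσ0
    exact (heq (ξ σ) ⟨hσ, hξX σ (le_of_lt hσ0)⟩).symm
  rw [(hder.congr_of_eventuallyEq hev).deriv]
  exact hneg _ (hω τ ⟨hτ.1.le, hτ.2.le⟩)

variable [PseudoMetricSpace 𝒰] {ω : ℝ → 𝒰} {ξ : ℝ → E}

/-- Near a point where `V ≠ 0`, the decrease is uniform in the state and in inputs near `U`. -/
theorem UDecrease.exists_nhds_decreaseAt (hV : UDecrease X₀ X f U V) (hU : IsCompact U)
    (hf : ContinuousOn (fun p : E × 𝒰 => f p.1 p.2) (X₀ ×ˢ (Set.univ : Set 𝒰)))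
    {x : E} (hx : x ∈ X) (hVx : V x ≠ 0) :
    ∃ N ∈ 𝓝 x, ∃ c > 0, ∃ O : Set 𝒰, IsOpen O ∧ U ⊆ O ∧ ∀ z ∈ N, DecreaseAt X f O V c z := by
  obtain ⟨W, Vt, hW, hxW, hWX₀, hVt, heq, hneg⟩ := hV.2.2.2 x hx hVx
  have hfd : ContinuousOn (fderiv ℝ Vt) W := hVt.continuousOn_fderiv_of_isOpen hW le_rfl
  have hcont : ContinuousOn (fun p : E × 𝒰 => fderiv ℝ Vt p.1 (f p.1 p.2))
      (W ×ˢ (Set.univ : Set 𝒰)) :=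
    (hfd.comp continuousOn_fst fun p hp => hp.1).clm_apply
      (hf.mono (Set.prod_mono hWX₀ le_rfl))
  have hcontx : ContinuousOn (fun u => fderiv ℝ Vt x (f x u)) U :=
    hcont.comp (f := fun u => (x, u)) (by fun_prop) fun u _ => ⟨hxW, trivial⟩
  obtain ⟨c, hc, hcU⟩ : ∃ c > 0, ∀ u ∈ U, fderiv ℝ Vt x (f x u) < -c := by
    rcases U.eq_empty_or_nonempty with rfl | hne
    · exact ⟨1, one_pos, by simp⟩
    · obtain ⟨u₀, hu₀, hmax⟩ := hU.exists_isMaxOn hne hcontx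
      have h₀ := hneg u₀ hu₀
      refine ⟨-(fderiv ℝ Vt x (f x u₀)) / 2, by linarith, fun u hu => ?_⟩
      have : fderiv ℝ Vt x (f x u) ≤ fderiv ℝ Vt x (f x u₀) := hmax hu
      linarith
  have hopen : IsOpen ((W ×ˢ (Set.univ : Set 𝒰)) ∩
      (fun p : E × 𝒰 => fderiv ℝ Vt p.1 (f p.1 p.2)) ⁻¹' Set.Iio (-c)) :=
    hcont.isOpen_inter_preimage (hW.prod isOpen_univ) isOpen_Iio
  obtain ⟨N, O, hN, hO, hxN, hUO, hsub⟩ := generalized_tube_lemma (isCompact_singleton (x := x))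
    hU hopen (by rintro ⟨z, u⟩ ⟨rfl, hu⟩; exact ⟨⟨hxW, trivial⟩, hcU u hu⟩)
  refine ⟨N ∩ W, inter_mem (hN.mem_nhds (hxN rfl)) (hW.mem_nhds hxW), c, hc, O, hO, hUO,
    fun z hz => ⟨W, Vt, hW, hz.2, hVt, heq, fun u hu => ?_⟩⟩
  have hmem := hsub (Set.mk_mem_prod hz.1 hu)
  exact le_of_lt hmem.2

/-- On a compact band `{a ≤ V ≤ b}` with `a > 0`, the decrease is uniform. -/
theorem UDecrease.exists_uniform_decrease (hV : UDecrease X₀ X f U V) (hU : IsCompact U)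
    (hf : ContinuousOn (fun p : E × 𝒰 => f p.1 p.2) (X₀ ×ˢ (Set.univ : Set 𝒰)))
    {a b : ℝ} (ha : 0 < a) (hab : a ≤ b) :
    ∃ c > 0, ∃ O : Set 𝒰, IsOpen O ∧ U ⊆ O ∧
      ∀ x ∈ X, a ≤ V x → V x ≤ b → DecreaseAt X f O V c x := by
  have key : ∃ c > 0, ∃ O : Set 𝒰, IsOpen O ∧ U ⊆ O ∧
      ∀ x ∈ {x ∈ X | a ≤ V x ∧ V x ≤ b}, DecreaseAt X f O V c x := by
    refine (hV.2.2.1 a b ha.le hab).induction_on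
      (p := fun S => ∃ c > 0, ∃ O : Set 𝒰, IsOpen O ∧ U ⊆ O ∧ ∀ x ∈ S, DecreaseAt X f O V c x)
      ?_ ?_ ?_ ?_
    · exact ⟨1, one_pos, Set.univ, isOpen_univ, Set.subset_univ _, by simp⟩
    · rintro S S' hSS' ⟨c, hc, O, hO, hUO, hS'⟩
      exact ⟨c, hc, O, hO, hUO, fun x hx => hS' x (hSS' hx)⟩
    · rintro S S' ⟨c, hc, O, hO, hUO, hS⟩ ⟨c', hc', O', hO', hUO', hS'⟩
      refine ⟨min c c', lt_min hc hc', O ∩ O', hO.inter hO', Set.subset_inter hUO hUO', ?_⟩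
      rintro x (hx | hx)
      · exact (hS x hx).mono Set.inter_subset_left (min_le_left _ _)
      · exact (hS' x hx).mono Set.inter_subset_right (min_le_right _ _)
    · rintro x ⟨hx, hax, -⟩
      obtain ⟨N, hN, hrest⟩ := hV.exists_nhds_decreaseAt hU hf hx (ha.trans_le hax).ne'
      exact ⟨N, mem_nhdsWithin_of_mem_nhds hN, hrest⟩
  obtain ⟨c, hc, O, hO, hUO, hd⟩ := key
  exact ⟨c, hc, O, hO, hUO, fun x hx hax hxb => hd x ⟨hx, hax, hxb⟩⟩

/-- Along a trajectory whose input stays in `U`, the function `V` is bounded. -/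
theorem UDecrease.le_initial_add_one (hV : UDecrease X₀ X f U V) (hU : IsCompact U)
    (hf : ContinuousOn (fun p : E × 𝒰 => f p.1 p.2) (X₀ ×ˢ (Set.univ : Set 𝒰)))
    (hξlip : LocallyLipschitz ξ) (hξX : ∀ t : ℝ, 0 ≤ t → ξ t ∈ X)
    (hode : ∀ᵐ t : ℝ, 0 ≤ t → HasDerivAt ξ (f (ξ t) (ω t)) t)
    (hω : ∀ t : ℝ, 0 ≤ t → ω t ∈ U) {t : ℝ} (ht : 0 ≤ t) :
    V (ξ t) ≤ V (ξ 0) + 1 := by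
  have hcont : ContinuousOn (fun τ => V (ξ τ)) (Set.Icc 0 t) :=
    hV.2.1.comp hξlip.continuous.continuousOn fun τ hτ => hξX τ hτ.1
  have hpos : 0 < V (ξ 0) + 1 := by linarith [hV.1 (ξ 0) (hξX 0 le_rfl)]
  obtain ⟨b, hb⟩ := (isCompact_Icc.image_of_continuousOn hcont).bddAbove
  obtain ⟨c, hc, O, -, hUO, hd⟩ :=
    hV.exists_uniform_decrease hU hf hpos (le_max_left (V (ξ 0) + 1) b)
  refine le_of_le_of_forall_final_segment ht hcont (by linarith) fun r hr habove => ?_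
  have hdecay := decay_of_decreaseAt hξlip hξX hode hr.1 hr.2
    (fun τ hτ => hd (ξ τ) (hξX τ (hr.1.trans hτ.1)) (habove τ hτ)
      ((hb ⟨τ, ⟨hr.1.trans hτ.1, hτ.2⟩, rfl⟩).trans (le_max_right _ _)))
    (fun τ hτ => hUO (hω τ (hr.1.trans hτ.1)))
  nlinarith [hr.2]

/-- Along a trajectory on which `V` is bounded and whose input approaches `U`, the values of `V`
tend to zero. -/
theorem UDecrease.eventually_le (hV : UDecrease X₀ X f U V) (hU : IsCompact U)
    (hf : ContinuousOn (fun p : E × 𝒰 => f p.1 p.2) (X₀ ×ˢ (Set.univ : Set 𝒰)))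
    (hξlip : LocallyLipschitz ξ) (hξX : ∀ t : ℝ, 0 ≤ t → ξ t ∈ X)
    (hode : ∀ᵐ t : ℝ, 0 ≤ t → HasDerivAt ξ (f (ξ t) (ω t)) t)
    (hω : convTo ω U) {b : ℝ} (hb : ∀ t : ℝ, 0 ≤ t → V (ξ t) ≤ b) {a : ℝ} (ha : 0 < a) :
    ∃ T : ℝ, 0 ≤ T ∧ ∀ t ≥ T, V (ξ t) ≤ a := by
  obtain ⟨c, hc, O, hO, hUO, hd⟩ := hV.exists_uniform_decrease hU hf ha (le_max_left a b)
  obtain ⟨δ, hδ, hδO⟩ := hU.exists_cthickening_subset_open hO hUO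
  obtain ⟨T, hT, hωT⟩ := hω δ hδ
  have hωO : ∀ t ≥ T, ω t ∈ O := fun t ht => by
    obtain ⟨u, hu, hdist⟩ := hωT t ht
    exact hδO (Metric.mem_cthickening_of_dist_le _ u _ _ hu hdist)
  have hdecay : ∀ r t : ℝ, T ≤ r → r ≤ t → (∀ τ ∈ Set.Icc r t, a ≤ V (ξ τ)) →
      V (ξ t) ≤ V (ξ r) - c * (t - r) := fun r t hr hrt habove =>
    decay_of_decreaseAt hξlip hξX hode (hT.trans hr) hrt
      (fun τ hτ => hd (ξ τ) (hξX τ (hT.trans (hr.trans hτ.1))) (habove τ hτ)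
        ((hb τ (hT.trans (hr.trans hτ.1))).trans (le_max_right _ _)))
      (fun τ hτ => hωO τ (hr.trans hτ.1))
  obtain ⟨s, hTs, hsa⟩ : ∃ s ≥ T, V (ξ s) ≤ a := by
    by_contra! hgt
    have hb0 : 0 ≤ b := (hV.1 _ (hξX T hT)).trans (hb T hT)
    have hle : T ≤ T + b / c := le_add_of_nonneg_right (by positivity)
    have h₁ := hdecay T (T + b / c) le_rfl hle fun τ hτ => (hgt τ hτ.1).le
    have h₂ := hgt (T + b / c) hle
    have h₃ := hb T hT
    have h₄ : c * (T + b / c - T) = b := by field_simp; ring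
    linarith
  refine ⟨s, hT.trans hTs, fun t ht => ?_⟩
  refine le_of_le_of_forall_final_segment (g := fun τ => V (ξ τ)) ht ?_ hsa fun r hr habove => ?_
  · exact hV.2.1.comp hξlip.continuous.continuousOn fun τ hτ => hξX τ (hT.trans (hTs.trans hτ.1))
  · have := hdecay r t (hTs.trans hr.1) hr.2 habove
    nlinarith [hr.2]

/-- If `V ∘ ξ` tends to zero, then every continuous output approaches the image of `Z_V`. -/
theorem UDecrease.convTo_image {M : Type*} [PseudoMetricSpace M] {g : E → M}
    (hV : UDecrease X₀ X f U V) (hg : ContinuousOn g X) (hξX : ∀ t : ℝ, 0 ≤ t → ξ t ∈ X)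
    (hlim : ∀ a > 0, ∃ T : ℝ, 0 ≤ T ∧ ∀ t ≥ T, V (ξ t) ≤ a) :
    convTo (fun t => g (ξ t)) (g '' ZV X V) := by
  intro ε hε
  have hC : IsCompact {x ∈ X | 0 ≤ V x ∧ V x ≤ 1} := hV.2.2.1 0 1 le_rfl zero_le_one
  have hCX : {x ∈ X | 0 ≤ V x ∧ V x ≤ 1} ⊆ X := fun x hx => hx.1
  have hfar : IsClosed {y : M | ∀ z ∈ ZV X V, ε ≤ dist y (g z)} := by
    simp only [Set.ofPred_forall]
    exact isClosed_biInter fun z _ => isClosed_le continuous_const (by fun_prop)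
  have hD : IsCompact ({x ∈ X | 0 ≤ V x ∧ V x ≤ 1} ∩
      g ⁻¹' {y : M | ∀ z ∈ ZV X V, ε ≤ dist y (g z)}) :=
    hC.of_isClosed_subset
      ((hg.mono hCX).preimage_isClosed_of_isClosed hC.isClosed hfar) Set.inter_subset_left
  obtain ⟨m, hm, hmD⟩ : ∃ m > 0, ∀ x ∈ {x ∈ X | 0 ≤ V x ∧ V x ≤ 1} ∩
      g ⁻¹' {y : M | ∀ z ∈ ZV X V, ε ≤ dist y (g z)}, m < V x := by
    rcases Set.eq_empty_or_nonempty ({x ∈ X | 0 ≤ V x ∧ V x ≤ 1} ∩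
      g ⁻¹' {y : M | ∀ z ∈ ZV X V, ε ≤ dist y (g z)}) with hempty | hne
    · exact ⟨1, one_pos, fun x hx => by rw [hempty] at hx; exact hx.elim⟩
    · obtain ⟨x₀, hx₀, hmin⟩ := hD.exists_isMinOn hne
        (hV.2.1.mono (Set.inter_subset_left.trans hCX))
      have hpos : 0 < V x₀ := by
        refine lt_of_le_of_ne hx₀.1.2.1 fun h0 => ?_
        have := hx₀.2 x₀ ⟨hx₀.1.1, h0.symm⟩
        rw [dist_self] at this
        linarith
      refine ⟨V x₀ / 2, by linarith, fun x hx => ?_⟩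
      have : V x₀ ≤ V x := hmin hx
      linarith
  obtain ⟨T, hT, hVT⟩ := hlim (min m 1) (lt_min hm one_pos)
  refine ⟨T, hT, fun t ht => ?_⟩
  have htX := hξX t (hT.trans ht)
  by_contra! hno
  have := hmD (ξ t) ⟨⟨htX, hV.1 _ htX, (hVT t ht).trans (min_le_right _ _)⟩,
    fun z hz => (hno (g z) ⟨z, hz, rfl⟩).le⟩
  exact absurd ((hVT t ht).trans (min_le_left _ _)) (not_le.2 this)

end Decrease

/-- under the Lyapunov hypothesis of Theorem 1, every trajectory
and output are precompact, and whenever `ω → U` (U compact) the state approaches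
`Z_{V_U}` and the output approaches `h(Z_{V_U})`. -/
theorem stmt15 {n : ℕ} {𝒰 𝒴 : Type*} [MetricSpace 𝒰] [CompleteSpace 𝒰]
    [MeasurableSpace 𝒰] [BorelSpace 𝒰] [MetricSpace 𝒴] [CompleteSpace 𝒴]
    (X₀ X : Set (Fin n → ℝ)) (hX₀ : IsOpen X₀) (hXsub : X ⊆ X₀)
    (f : (Fin n → ℝ) → 𝒰 → (Fin n → ℝ))
    (hf : ContinuousOn (fun p : (Fin n → ℝ) × 𝒰 => f p.1 p.2) (X₀ ×ˢ (Set.univ : Set 𝒰)))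
    (h : (Fin n → ℝ) → 𝒴) (hh : ContinuousOn h X)
    (γ : ℝ≥0 → ℝ≥0) (hγ : KInfty γ)
    (VU : Set 𝒰 → ((Fin n → ℝ) → ℝ))
    (hVU : ∀ U : Set 𝒰, IsCompact U → UDecrease X₀ X f U (VU U) ∧
      EMetric.diam (h '' ZV X (VU U)) ≤ extK γ (EMetric.diam U))
    (ω : ℝ → 𝒰) (hmeas : Measurable ω) (hpre : Precomp ω)
    (ξ : ℝ → (Fin n → ℝ)) (hξlip : LocallyLipschitz ξ)
    (hξX : ∀ t : ℝ, 0 ≤ t → ξ t ∈ X)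
    (hode : ∀ᵐ t : ℝ ∂volume, 0 ≤ t → HasDerivAt ξ (f (ξ t) (ω t)) t) :
    Precomp ξ ∧ Precomp (fun t => h (ξ t)) ∧
    ∀ U : Set 𝒰, IsCompact U → convTo ω U →
      convTo ξ (ZV X (VU U)) ∧ convTo (fun t => h (ξ t)) (h '' ZV X (VU U)) := by
  obtain ⟨K, hK, hωK⟩ := hpre
  have hVK := (hVU K hK).1
  have hC : IsCompact {x ∈ X | 0 ≤ VU K x ∧ VU K x ≤ VU K (ξ 0) + 1} :=
    hVK.2.2.1 0 _ le_rfl (by linarith [hVK.1 (ξ 0) (hξX 0 le_rfl)])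
  have hCX : {x ∈ X | 0 ≤ VU K x ∧ VU K x ≤ VU K (ξ 0) + 1} ⊆ X := fun x hx => hx.1
  have hξC : ∀ t : ℝ, 0 ≤ t → ξ t ∈ {x ∈ X | 0 ≤ VU K x ∧ VU K x ≤ VU K (ξ 0) + 1} :=
    fun t ht => ⟨hξX t ht, hVK.1 _ (hξX t ht),
      hVK.le_initial_add_one hK hf hξlip hξX hode hωK ht⟩
  refine ⟨⟨_, hC, hξC⟩,
    ⟨_, hC.image_of_continuousOn (hh.mono hCX), fun t ht => Set.mem_image_of_mem h (hξC t ht)⟩,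
    fun U hU hωU => ?_⟩
  have hV := (hVU U hU).1
  obtain ⟨b, hb⟩ := (hC.image_of_continuousOn (hV.2.1.mono hCX)).bddAbove
  have hlim : ∀ a > 0, ∃ T : ℝ, 0 ≤ T ∧ ∀ t ≥ T, VU U (ξ t) ≤ a := fun a ha =>
    hV.eventually_le hU hf hξlip hξX hode hωU
      (fun t ht => hb (Set.mem_image_of_mem _ (hξC t ht))) ha
  refine ⟨?_, hV.convTo_image hh hξX hlim⟩
  simpa only [id, Set.image_id'] using hV.convTo_image continuousOn_id hξX hlim
end

section
/- Let 𝒳₀ ⊆ ℝⁿ be open, 𝒳 ⊆ 𝒳₀, 𝒰 and 𝒴 complete metric spaces, f : 𝒳₀ × 𝒰 → ℝⁿ continuous, and h : 𝒳 → 𝒴 continuous. Let γ ∈ 𝒦∞ and suppose that for each compact U ⊆ 𝒰 there exists a U-decrease function V_U with |h(Z_{V_U})| ≤ γ(|U|). Then for every Lebesgue-measurable precompact ω : [0,∞) → 𝒰 and every locally Lipschitz ξ : [0,∞) → 𝒳 with ξ'(t) = f(ξ(t), ω(t)) for almost every t ≥ 0, the output η := h∘ξ satisfies ‖η‖_aa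 ≤ γ(‖ω‖_aa); that is, the behavior of the system ẋ = f(x,u), y = h(x) has Cauchy gain γ. -/
open Filter Topology MeasureTheory
open scoped ENNReal NNReal

open Set

/-- A Lipschitz function whose derivative is almost everywhere at most `c` grows at most at
rate `c`. -/
theorem LipschitzOnWith.sub_le_of_ae_hasDerivAt_le {g : ℝ → ℝ} {K : ℝ≥0} {a b c : ℝ}
    (hab : a ≤ b) (hg : LipschitzOnWith K g (Icc a b))
    (hd : ∀ᵐ t : ℝ, t ∈ Icc a b → ∃ d ≤ c, HasDerivAt g d t) :
    g b - g a ≤ c * (b - a) := by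
  have hac : AbsolutelyContinuousOnInterval g a b :=
    LipschitzOnWith.absolutelyContinuousOnInterval (by rwa [uIcc_of_le hab])
  rw [← hac.integral_deriv_eq_sub]
  have hle : ∫ x in a..b, deriv g x ≤ ∫ _ in a..b, c := by
    refine intervalIntegral.integral_mono_ae_restrict hab hac.intervalIntegrable_deriv
      intervalIntegrable_const ?_
    refine (ae_restrict_iff' measurableSet_Icc).2 ?_
    filter_upwards [hd] with t ht hmem
    obtain ⟨d, hdc, hd⟩ := ht hmem
    exact hd.deriv.trans_le hdc
  refine hle.trans_eq ?_
  rw [intervalIntegral.integral_const, smul_eq_mul, mul_comm]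

/-- Negativity of a directional derivative at a point, for all inputs in a compact set, is uniform
on a neighborhood of that point. -/
theorem exists_open_fderiv_le_neg {E 𝒰 : Type*} [NormedAddCommGroup E] [NormedSpace ℝ E]
    [PseudoMetricSpace 𝒰] {W : Set E} {f : E → 𝒰 → E} {U : Set 𝒰} {g : E → ℝ} {x : E}
    (hW : IsOpen W) (hx : x ∈ W)
    (hf : ContinuousOn (fun p : E × 𝒰 => f p.1 p.2) (W ×ˢ (univ : Set 𝒰)))
    (hU : IsCompact U) (hg : ContDiffOn ℝ 1 g W) (hneg : ∀ u ∈ U, fderiv ℝ g x (f x u) < 0) :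
    ∃ ε > 0, ∃ N : Set E, IsOpen N ∧ x ∈ N ∧ N ⊆ W ∧
      ∀ y ∈ N, ∀ u ∈ U, fderiv ℝ g y (f y u) ≤ -ε := by
  have hcont : ContinuousOn (fun p : E × 𝒰 => fderiv ℝ g p.1 (f p.1 p.2))
      (W ×ˢ (univ : Set 𝒰)) :=
    ((hg.continuousOn_fderiv_of_isOpen hW le_rfl).comp continuousOn_fst
      fun p hp => hp.1).clm_apply hf
  have hopen : IsOpen (W ×ˢ (univ : Set 𝒰)) := hW.prod isOpen_univ
  have hat : ∀ u, ContinuousAt (fun p : E × 𝒰 => fderiv ℝ g p.1 (f p.1 p.2)) (x, u) :=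
    fun u => hcont.continuousAt (hopen.mem_nhds ⟨hx, mem_univ u⟩)
  obtain ⟨ε, hε, hεU⟩ : ∃ ε > 0, ∀ u ∈ U, fderiv ℝ g x (f x u) < -ε := by
    rcases U.eq_empty_or_nonempty with rfl | hne
    · exact ⟨1, one_pos, by simp⟩
    · have hxu : Continuous fun u => fderiv ℝ g x (f x u) :=
        continuous_iff_continuousAt.2 fun u =>
          ContinuousAt.comp (f := fun u => (x, u)) (hat u) (by fun_prop)
      obtain ⟨u₀, hu₀, hmax⟩ := hU.exists_isMaxOn hne hxu.continuousOn
      refine ⟨-fderiv ℝ g x (f x u₀) / 2, by linarith [hneg u₀ hu₀], fun u hu => ?_⟩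
      have : fderiv ℝ g x (f x u) ≤ fderiv ℝ g x (f x u₀) := hmax hu
      linarith [hneg u₀ hu₀]
  have hev : ∀ᶠ y in 𝓝 x, ∀ u ∈ U, fderiv ℝ g y (f y u) < -ε :=
    hU.eventually_forall_of_forall_eventually fun u hu =>
      (hat u).eventually_lt_const (hεU u hu)
  obtain ⟨N, hN, hNo, hxN⟩ := eventually_nhds_iff.1 (hev.and (hW.mem_nhds hx))
  exact ⟨ε, hε, N, hNo, hxN, fun y hy => (hN y hy).2, fun y hy u hu => ((hN y hy).1 u hu).le⟩

section Trajectory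

variable {E 𝒰 : Type*} [NormedAddCommGroup E] [NormedSpace ℝ E] [PseudoMetricSpace 𝒰]
  {X₀ X : Set E} {f : E → 𝒰 → E} {U : Set 𝒰} {V : E → ℝ} {ω : ℝ → 𝒰} {ξ : ℝ → E} {T : ℝ}

/-- Near a state where a decrease function does not vanish, it decreases along trajectories at a
uniform rate. -/
theorem UDecrease.exists_nhds_rate (hV : UDecrease X₀ X f U V)
    (hf : ContinuousOn (fun p : E × 𝒰 => f p.1 p.2) (X₀ ×ˢ (univ : Set 𝒰)))
    (hU : IsCompact U) (hω : ∀ t ≥ T, ω t ∈ U) (hξ : LocallyLipschitz ξ)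
    (hξX : ∀ t ≥ T, ξ t ∈ X) (hd : ∀ᵐ t : ℝ, T ≤ t → HasDerivAt ξ (f (ξ t) (ω t)) t)
    {x : E} (hx : x ∈ X) (hVx : V x ≠ 0) :
    ∃ N ∈ 𝓝 x, ∃ ε > 0, ∀ t ≥ T, ξ t ∈ N →
      ∀ᶠ z in 𝓝[>] t, V (ξ z) ≤ V (ξ t) - ε * (z - t) := by
  obtain ⟨W, g, hW, hxW, hWX, hg, hgV, hneg⟩ := hV.2.2.2 x hx hVx
  obtain ⟨ε, hε, N, hNo, hxN, hNW, hN⟩ := exists_open_fderiv_le_neg hW hxW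
    (hf.mono (prod_mono_left hWX)) hU hg hneg
  refine ⟨N, hNo.mem_nhds hxN, ε, hε, fun t ht htN => ?_⟩
  obtain ⟨K₁, s, hs, hLs⟩ := (hg.contDiffAt (hW.mem_nhds (hNW htN))).exists_lipschitzOnWith
  obtain ⟨K₂, S, hS, hLS⟩ := hξ t
  have hJ : S ∩ ξ ⁻¹' (s ∩ N) ∈ 𝓝 t :=
    inter_mem hS (hξ.continuous.continuousAt.preimage_mem_nhds
      (inter_mem hs (hNo.mem_nhds htN)))
  obtain ⟨r, hr, hrJ⟩ := Metric.mem_nhds_iff.1 hJ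
  filter_upwards [Ioo_mem_nhdsGT (show t < t + r by linarith)] with z hz
  have hsub : Icc t z ⊆ S ∩ ξ ⁻¹' (s ∩ N) := fun y hy => hrJ <| by
    rw [Metric.mem_ball, Real.dist_eq, abs_of_nonneg (by linarith [hy.1])]
    linarith [hy.2, hz.2]
  have hL : LipschitzOnWith (K₁ * K₂) (g ∘ ξ) (Icc t z) :=
    hLs.comp (hLS.mono fun y hy => (hsub hy).1) fun y hy => (hsub hy).2.1
  have hle := hL.sub_le_of_ae_hasDerivAt_le (c := -ε) hz.1.le <| by
    filter_upwards [hd] with y hy hyI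
    have hyN : ξ y ∈ N := (hsub hyI).2.2
    refine ⟨_, hN _ hyN _ (hω y (ht.le.trans hyI.1)), ?_⟩
    exact ((hg.contDiffAt (hW.mem_nhds (hNW hyN))).differentiableAt
      one_ne_zero).hasFDerivAt.comp_hasDerivAt y (hy (ht.le.trans hyI.1))
  have hVz : g (ξ z) = V (ξ z) :=
    hgV _ ⟨hNW (hsub (right_mem_Icc.2 hz.1.le)).2.2, hξX z (ht.le.trans hz.1.le)⟩
  have hVt : g (ξ t) = V (ξ t) := hgV _ ⟨hNW htN, hξX t ht⟩
  simp only [Function.comp_apply, hVz, hVt] at hle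
  linarith

/-- Decrease functions are nonincreasing along trajectories. -/
theorem UDecrease.antitoneOn_comp (hV : UDecrease X₀ X f U V)
    (hf : ContinuousOn (fun p : E × 𝒰 => f p.1 p.2) (X₀ ×ˢ (univ : Set 𝒰)))
    (hU : IsCompact U) (hω : ∀ t ≥ T, ω t ∈ U) (hξ : LocallyLipschitz ξ)
    (hξX : ∀ t ≥ T, ξ t ∈ X) (hd : ∀ᵐ t : ℝ, T ≤ t → HasDerivAt ξ (f (ξ t) (ω t)) t) :
    AntitoneOn (fun t => V (ξ t)) (Ici T) := by
  have hcont : ContinuousOn (fun t => V (ξ t)) (Ici T) :=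
    hV.2.1.comp hξ.continuous.continuousOn fun t ht => hξX t ht
  intro a ha b _ hab
  refine le_of_forall_pos_le_add fun m hm => ?_
  have hmax : max (V (ξ b)) m ≤ max (V (ξ a)) m := by
    refine image_le_of_liminf_slope_right_le_deriv_boundary (a := a) (b := b)
      (f := fun t => max (V (ξ t)) m) (B := fun _ => max (V (ξ a)) m) (B' := fun _ => 0)
      ((hcont.mono fun t ht => le_trans ha ht.1).sup continuousOn_const) le_rfl
      continuousOn_const (fun _ _ => hasDerivWithinAt_const _ _ _) (fun t ht r hr => ?_)
      (right_mem_Icc.2 hab)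
    have htT : T ≤ t := le_trans ha ht.1
    have hev : ∀ᶠ z in 𝓝[>] t, max (V (ξ z)) m ≤ max (V (ξ t)) m := by
      by_cases h0 : V (ξ t) = 0
      · have hlt : ∀ᶠ z in 𝓝[>] t, V (ξ z) < m :=
          (((hcont t htT).mono (Ioi_subset_Ici htT)).tendsto).eventually_lt_const (by rwa [h0])
        filter_upwards [hlt] with z hz
        exact max_le (hz.le.trans (le_max_right _ _)) (le_max_right _ _)
      · obtain ⟨N, hN, ε, hε, hdec⟩ := hV.exists_nhds_rate hf hU hω hξ hξX hd (hξX t htT) h0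
        filter_upwards [hdec t htT (mem_of_mem_nhds hN), self_mem_nhdsWithin] with z hz hzt
        have : 0 ≤ ε * (z - t) := mul_nonneg hε.le (sub_nonneg.2 (le_of_lt hzt))
        exact max_le_max (by linarith) le_rfl
    refine (hev.and self_mem_nhdsWithin).frequently.mono fun z hz => lt_of_le_of_lt ?_ hr
    rw [slope_def_field]
    exact div_nonpos_of_nonpos_of_nonneg (sub_nonpos.2 hz.1) (sub_nonneg.2 (le_of_lt hz.2))
  have h0 := hV.1 _ (hξX a ha)
  exact (le_max_left _ _).trans (hmax.trans (max_le (by linarith) (by linarith)))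

/-- Decrease functions tend to zero along trajectories. -/
theorem UDecrease.tendsto_comp_zero (hV : UDecrease X₀ X f U V)
    (hf : ContinuousOn (fun p : E × 𝒰 => f p.1 p.2) (X₀ ×ˢ (univ : Set 𝒰)))
    (hU : IsCompact U) (hω : ∀ t ≥ T, ω t ∈ U) (hξ : LocallyLipschitz ξ)
    (hξX : ∀ t ≥ T, ξ t ∈ X) (hd : ∀ᵐ t : ℝ, T ≤ t → HasDerivAt ξ (f (ξ t) (ω t)) t) :
    Tendsto (fun t => V (ξ t)) atTop (𝓝 0) := by
  have hanti := hV.antitoneOn_comp hf hU hω hξ hξX hd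
  have hcont : ContinuousOn (fun t => V (ξ t)) (Ici T) :=
    hV.2.1.comp hξ.continuous.continuousOn fun t ht => hξX t ht
  suffices hsmall : ∀ a > 0, ∃ t ≥ T, V (ξ t) < a by
    refine tendsto_order.2 ⟨fun a ha => ?_, fun a ha => ?_⟩
    · filter_upwards [eventually_ge_atTop T] with t ht using ha.trans_le (hV.1 _ (hξX t ht))
    · obtain ⟨s, hs, hsa⟩ := hsmall a ha
      filter_upwards [eventually_ge_atTop s] with t ht
      exact (hanti hs (hs.le.trans ht) ht).trans_lt hsa
  intro a ha
  by_contra! hge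
  have hK := hV.2.2.1 a (V (ξ T)) ha.le (hge T le_rfl)
  obtain ⟨ε, hε, hdec⟩ : ∃ ε > 0, ∀ t ≥ T, ξ t ∈ {x ∈ X | a ≤ V x ∧ V x ≤ V (ξ T)} →
      ∀ᶠ z in 𝓝[>] t, V (ξ z) ≤ V (ξ t) - ε * (z - t) := by
    refine hK.induction_on (p := fun S => ∃ ε > 0, ∀ t ≥ T, ξ t ∈ S →
      ∀ᶠ z in 𝓝[>] t, V (ξ z) ≤ V (ξ t) - ε * (z - t)) ⟨1, one_pos, by simp⟩ ?_ ?_ ?_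
    · rintro s t hst ⟨ε, hε, hdec⟩
      exact ⟨ε, hε, fun r hr hrs => hdec r hr (hst hrs)⟩
    · rintro s t ⟨ε₁, hε₁, hdec₁⟩ ⟨ε₂, hε₂, hdec₂⟩
      refine ⟨min ε₁ ε₂, lt_min hε₁ hε₂, fun r hr hrs => ?_⟩
      rcases hrs with hrs | hrs
      · filter_upwards [hdec₁ r hr hrs, self_mem_nhdsWithin] with z hz hzr
        have := mul_le_mul_of_nonneg_right (min_le_left ε₁ ε₂) (sub_nonneg.2 (le_of_lt hzr))
        linarith
      · filter_upwards [hdec₂ r hr hrs, self_mem_nhdsWithin] with z hz hzr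
        have := mul_le_mul_of_nonneg_right (min_le_right ε₁ ε₂) (sub_nonneg.2 (le_of_lt hzr))
        linarith
    · rintro x ⟨hx, hxa, -⟩
      obtain ⟨N, hN, hrate⟩ :=
        hV.exists_nhds_rate hf hU hω hξ hξX hd hx (ha.trans_le hxa).ne'
      exact ⟨N, mem_nhdsWithin_of_mem_nhds hN, hrate⟩
  have hlin : ∀ b ≥ T, V (ξ b) ≤ V (ξ T) - ε * (b - T) := fun b hb => by
    refine image_le_of_liminf_slope_right_le_deriv_boundary (a := T) (b := b)
      (f := fun t => V (ξ t)) (B := fun t => V (ξ T) - ε * (t - T)) (B' := fun _ => -ε)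
      (hcont.mono fun t ht => ht.1) (by simp) (by fun_prop) (fun t _ => ?_) (fun t ht r hr => ?_)
      (right_mem_Icc.2 hb)
    · simpa using ((((hasDerivAt_id t).sub_const T).const_mul ε).const_sub
        (V (ξ T))).hasDerivWithinAt
    · have hmem : ξ t ∈ {x ∈ X | a ≤ V x ∧ V x ≤ V (ξ T)} :=
        ⟨hξX t ht.1, hge t ht.1, hanti self_mem_Ici ht.1 ht.1⟩
      refine ((hdec t ht.1 hmem).and self_mem_nhdsWithin).frequently.mono fun z hz =>
        lt_of_le_of_lt ?_ hr
      rw [slope_def_field, div_le_iff₀ (sub_pos.2 hz.2)]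
      linarith [hz.1]
  have hb : T ≤ T + V (ξ T) / ε := by
    have := div_nonneg (hV.1 _ (hξX T le_rfl)) hε.le
    linarith
  have h1 := hlin _ hb
  have h2 := hge _ hb
  rw [add_sub_cancel_left, mul_div_cancel₀ _ hε.ne'] at h1
  linarith

/-- The asymptotic amplitude of the output is bounded by the diameter of the output image of the
zero set of a decrease function. -/
theorem UDecrease.aa_comp_le {𝒴 : Type*} [PseudoMetricSpace 𝒴] {h : E → 𝒴}
    (hh : ContinuousOn h X) (hV : UDecrease X₀ X f U V)
    (hf : ContinuousOn (fun p : E × 𝒰 => f p.1 p.2) (X₀ ×ˢ (univ : Set 𝒰)))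
    (hU : IsCompact U) (hω : ∀ t ≥ T, ω t ∈ U) (hξ : LocallyLipschitz ξ)
    (hξX : ∀ t ≥ T, ξ t ∈ X) (hd : ∀ᵐ t : ℝ, T ≤ t → HasDerivAt ξ (f (ξ t) (ω t)) t) :
    aa (fun t => h (ξ t)) ≤ Metric.ediam (h '' ZV X V) := by
  have hlim := hV.tendsto_comp_zero hf hU hω hξ hξX hd
  have hcluster : ∀ u : Ultrafilter ℝ, ↑u ≤ (atTop : Filter ℝ) →
      ∃ x ∈ ZV X V, Tendsto (fun t => h (ξ t)) u (𝓝 (h x)) := fun u hu => by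
    have hmem : ∀ᶠ t in (u : Filter ℝ), ξ t ∈ {x ∈ X | 0 ≤ V x ∧ V x ≤ 1} := by
      filter_upwards [hu (eventually_ge_atTop T), hu (hlim.eventually_le_const one_pos)]
        with t ht ht1 using ⟨hξX t ht, hV.1 _ (hξX t ht), ht1⟩
    obtain ⟨x, hx, hux⟩ := (hV.2.2.1 0 1 le_rfl zero_le_one).ultrafilter_le_nhds (u.map ξ)
      (le_principal_iff.2 hmem)
    have hwithin : Tendsto ξ u (𝓝[X] x) :=
      tendsto_nhdsWithin_iff.2 ⟨hux, hmem.mono fun t ht => ht.1⟩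
    have hVx : V x = 0 :=
      tendsto_nhds_unique ((hV.2.1 x hx.1).tendsto.comp hwithin) (hlim.mono_left hu)
    exact ⟨x, ⟨hx.1, hVx⟩, (hh x hx.1).tendsto.comp hwithin⟩
  refine le_of_forall_gt_imp_ge_of_dense fun c hc => ?_
  refine limsup_le_of_le (by isBoundedDefault) ?_
  refine mem_iff_ultrafilter.2 fun u hu => ?_
  obtain ⟨x, hx, hxlim⟩ := hcluster (u.map Prod.fst) (tendsto_fst.mono_left hu)
  obtain ⟨y, hy, hylim⟩ := hcluster (u.map Prod.snd) (tendsto_snd.mono_left hu)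
  have hed : Tendsto (fun p : ℝ × ℝ => edist (h (ξ p.1)) (h (ξ p.2))) u
      (𝓝 (edist (h x) (h y))) := Filter.Tendsto.edist hxlim hylim
  exact hed.eventually_le_const
    ((Metric.edist_le_ediam_of_mem (mem_image_of_mem h hx) (mem_image_of_mem h hy)).trans_lt hc)

end Trajectory

/-- Theorem 1, Cauchy gain part: the behavior of `ẋ = f(x,u)`,
`y = h(x)` has Cauchy gain γ. -/
theorem stmt16 {n : ℕ} {𝒰 𝒴 : Type*} [MetricSpace 𝒰] [CompleteSpace 𝒰]
    [MeasurableSpace 𝒰] [BorelSpace 𝒰] [MetricSpace 𝒴] [CompleteSpace 𝒴]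
    (X₀ X : Set (Fin n → ℝ)) (hX₀ : IsOpen X₀) (hXsub : X ⊆ X₀)
    (f : (Fin n → ℝ) → 𝒰 → (Fin n → ℝ))
    (hf : ContinuousOn (fun p : (Fin n → ℝ) × 𝒰 => f p.1 p.2) (X₀ ×ˢ (Set.univ : Set 𝒰)))
    (h : (Fin n → ℝ) → 𝒴) (hh : ContinuousOn h X)
    (γ : ℝ≥0 → ℝ≥0) (hγ : KInfty γ)
    (VU : Set 𝒰 → ((Fin n → ℝ) → ℝ))
    (hVU : ∀ U : Set 𝒰, IsCompact U → UDecrease X₀ X f U (VU U) ∧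
      EMetric.diam (h '' ZV X (VU U)) ≤ extK γ (EMetric.diam U)) :
    ∀ ω : ℝ → 𝒰, Measurable ω → Precomp ω →
    ∀ ξ : ℝ → (Fin n → ℝ), LocallyLipschitz ξ → (∀ t : ℝ, 0 ≤ t → ξ t ∈ X) →
    (∀ᵐ t : ℝ ∂volume, 0 ≤ t → HasDerivAt ξ (f (ξ t) (ω t)) t) →
    aa (fun t => h (ξ t)) ≤ extK γ (aa ω) := by
  intro ω _ hω ξ hξ hξX hd
  obtain ⟨K, hK, hωK⟩ := hω
  rcases eq_or_ne (aa ω) ⊤ with htop | htop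
  · simp [extK, htop]
  obtain ⟨r, hr⟩ : ∃ r : ℝ≥0, (r : ℝ≥0∞) = aa ω := ⟨_, ENNReal.coe_toNNReal htop⟩
  have hle : ∀ c > r, aa (fun t => h (ξ t)) ≤ γ c := fun c hc => by
    have hlt : aa ω < c := by rw [← hr]; exact_mod_cast hc
    have hev := eventually_lt_of_limsup_lt hlt
    rw [prod_atTop_atTop_eq] at hev
    obtain ⟨T, hT⟩ := eventually_atTop_prod_self'.1 hev
    let S := ω '' Ici (max T 0)
    have hcpt : IsCompact (closure S) := by
      refine hK.closure_of_subset ?_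
      rintro _ ⟨t, ht, rfl⟩
      exact hωK t ((le_max_right _ _).trans ht)
    have hdiam : Metric.ediam (closure S) ≤ c := by
      rw [Metric.ediam_closure]
      refine Metric.ediam_le ?_
      rintro _ ⟨s, hs, rfl⟩ _ ⟨t, ht, rfl⟩
      exact (hT s ((le_max_left _ _).trans hs) t ((le_max_left _ _).trans ht)).le
    obtain ⟨hV, hVd⟩ := hVU _ hcpt
    have hT0 : ∀ t ≥ max T 0, 0 ≤ t := fun t ht => (le_max_right _ _).trans ht
    refine (hV.aa_comp_le hh hf hcpt (T := max T 0)
      (fun t ht => subset_closure (mem_image_of_mem ω ht)) hξ (fun t ht => hξX t (hT0 t ht))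
      (hd.mono fun t ht htT => ht (hT0 t htT))).trans (hVd.trans ?_)
    have hne : Metric.ediam (closure S) ≠ ⊤ := ne_top_of_le_ne_top ENNReal.coe_ne_top hdiam
    refine (if_neg hne).trans_le ?_
    exact ENNReal.coe_le_coe.2 (hγ.2.1.monotone
      (ENNReal.toNNReal_mono ENNReal.coe_ne_top hdiam))
  have hlim : Tendsto (fun c : ℝ≥0 => (γ c : ℝ≥0∞)) (𝓝[>] r) (𝓝 (γ r)) :=
    ENNReal.tendsto_coe.2 (hγ.1.continuousAt.tendsto.mono_left nhdsWithin_le_nhds)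
  rw [← hr, extK, if_neg ENNReal.coe_ne_top, ENNReal.toNNReal_coe]
  exact ge_of_tendsto hlim (eventually_mem_nhdsWithin.mono hle)
end
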